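/- There exists ℓ₀ such that for every ℓ ≥ ℓ₀, writing n = n_{ℓ−1}: the substantial n-crossings cover a proportion at least 1 − (d+2)η of the interval I_n; in particular there exists at least one substantial n-crossing. Moreover, if all substantial n-crossings are synchronized, then each substantial n-crossing has size at least (1 − (d+2)η)·h_n and there are at most two of them. -/

import Mathlib

/-!
Put `n = n_{ℓ-1}`. At step `n + 1`, with `k = k(ℓ-1)`, `h_{n-k}` spacers are placed above every
subcolumn, and then only the single Chacon spacers are added until tower `n_ℓ`. So inside tower
`n_ℓ` consecutive occurrences of tower `n` lie in different subcolumns and are separated by gaps of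
length at most `h_{n-k} + 1`, which is `o(h_n)` (`next_occT`, `prev_occT`, `pow_mul_spa_le`). As
`x_i ∈ X_∞` is well inside tower `n_ℓ`, each coordinate meets at most one gap in `I_n`: it splits
`I_n` into a left occurrence, a short gap, and a right occurrence (`Split`, `exists_split`).

The `d` gaps have total length at most `η h_n` for large `ℓ`, and the rest of `I_n` meets at most
`d + 1` crossings, the non-substantial ones contributing less than `η h_n` points each. This bounds
the uncovered part of `I_n` by `(d + 2) η h_n` (`Split.card_bad_le`).

Suppose that all substantial crossings are synchronized. Between two of them, one coordinate
changes subcolumn, hence all do (`Split.cross_all`); since each coordinate has a single gap, there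
are at most two substantial crossings. If there is only one, it covers almost all of `I_n` by itself.
If there are two, no point where some but not all coordinates have passed the end of their left
occurrence can be in a substantial crossing, so these ends lie within `(d + 2) η h_n` of each other;
so do the beginnings of the right occurrences, which makes both
crossings long (`Split.card_ge_of_two`).
-/

open MeasureTheory Set Filter Topology
open scoped ENNReal
open scoped Classical

noncomputable section

/-! ## The nearly finite Chacon transformation: symbolic model -/

/-- The alphabet `{*} ∪ ℕ` is modelled by `Option ℕ`, `none` playing the role of `*`. -/
instance optionNatTop : TopologicalSpace (Option ℕ) := ⊥

/-- The data of the two sequences `(n_ℓ)` and `(ℓ_k)` used in the construction of the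
nearly finite Chacon transformation, together with the growth conditions imposed on them. -/
structure NFCseq where
  nseq : ℕ → ℕ
  lseq : ℕ → ℕ
  nseq_zero : nseq 0 = 0
  lseq_zero : lseq 0 = 1
  lseq_strictMono : StrictMono lseq
  nseq_growth : ∀ ℓ : ℕ, 1 ≤ ℓ → nseq (ℓ - 1) + 2 * ℓ < nseq ℓ
  lseq_growth : ∀ k : ℕ, (2 : ℝ) ≤ (1 + ((7 : ℝ) ^ k)⁻¹) ^ (lseq (k + 1) - lseq k)

namespace NFCseq

/-- `k(ℓ)`: the unique `k` with `ℓ_k ≤ ℓ < ℓ_{k+1}`. -/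
def kOf (P : NFCseq) (ℓ : ℕ) : ℕ := sSup {k | P.lseq k ≤ ℓ}

/-- The heights `h_n` of the towers. -/
def hgt (P : NFCseq) : ℕ → ℕ
  | 0 => 1
  | n + 1 =>
    3 * P.hgt n +
      3 * (if hn : ∃ ℓ, 1 ≤ ℓ ∧ P.nseq ℓ = n then P.hgt (n - P.kOf (Nat.find hn)) else 0) + 1
termination_by n => n
decreasing_by all_goals omega

theorem hgt_pos (P : NFCseq) (n : ℕ) : 0 < P.hgt n := by
  cases n with
  | zero => simp [hgt]
  | succ n => rw [hgt]; omega

/-- The number of spacers put above the first subcolumn at step `n+1`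
(`h_{n-k(ℓ)}` if `n = n_ℓ`, and `0` otherwise). -/
def spa (P : NFCseq) (n : ℕ) : ℕ :=
  if hn : ∃ ℓ, 1 ≤ ℓ ∧ P.nseq ℓ = n then P.hgt (n - P.kOf (Nat.find hn)) else 0

/-- The map `p_n` sending the index of a level of tower `n+1` to the index of the level of
tower `n` containing it (`none` if that level lies outside tower `n`). -/
def pmap (P : NFCseq) (n j : ℕ) : Option ℕ :=
  if j < P.hgt n then some j
  else if j < P.hgt n + P.spa n then none
  else if j < 2 * P.hgt n + P.spa n then some (j - (P.hgt n + P.spa n))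
  else if j < 2 * P.hgt n + 2 * P.spa n + 1 then none
  else if j < 3 * P.hgt n + 2 * P.spa n + 1 then some (j - (2 * P.hgt n + 2 * P.spa n + 1))
  else none

/-- The defining property of points of the space `X`. -/
def Xspec (P : NFCseq) (x : ℕ → Option ℕ) : Prop :=
  (∀ n, x n = (x (n + 1)).bind (P.pmap n)) ∧ ∃ n, x n ≠ none

/-- The space `X` of the symbolic model, with its product (subspace) topology. -/
abbrev Xpt (P : NFCseq) : Type := {x : ℕ → Option ℕ // P.Xspec x}

instance (P : NFCseq) : MeasurableSpace P.Xpt := borel _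

/-- `L_n^j`, the `j`-th level of tower `n`. -/
def level (P : NFCseq) (n j : ℕ) : Set P.Xpt := {x | x.1 n = some j}

/-- `C_n`, the union of all levels of tower `n`. -/
def tower (P : NFCseq) (n : ℕ) : Set P.Xpt := {x | x.1 n ≠ none}

theorem pmap_zero (P : NFCseq) (n : ℕ) : P.pmap n 0 = some 0 := by
  unfold pmap
  simp [P.hgt_pos n]

/-- The point `𝟎 = (0,0,…)`. -/
def zeroPt (P : NFCseq) : P.Xpt :=
  ⟨fun _ => some 0, fun n => by
    show some 0 = (some 0).bind (P.pmap n)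
    simp [P.pmap_zero n], 0, by simp⟩

/-- `t_n(x) ∈ {1,2,3}`: the subcolumn of tower `n` to which `x` belongs
(junk value `0` if `x` is not in tower `n+1`). -/
def tcol (P : NFCseq) (n : ℕ) (x : P.Xpt) : ℕ :=
  match x.1 (n + 1) with
  | none => 0
  | some j =>
    if j < P.hgt n + P.spa n then 1
    else if j < 2 * P.hgt n + 2 * P.spa n + 1 then 2
    else 3

/-- The index (from `0` to `3^(m-n) - 1`, ordered from bottom to top of tower `m`) of the
occurrence of tower `n` inside tower `m` to which `x` belongs. -/
def occIdx (P : NFCseq) (n m : ℕ) (x : P.Xpt) : ℕ :=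
  ∑ r ∈ Finset.Ico n m, (P.tcol r x - 1) * 3 ^ (r - n)

/-- `x` belongs to one of the first hundred occurrences of tower `n` inside tower `m`. -/
def inFirstHundred (P : NFCseq) (n m : ℕ) (x : P.Xpt) : Prop := P.occIdx n m x < 100

/-- `x` belongs to one of the last hundred occurrences of tower `n` inside tower `m`. -/
def inLastHundred (P : NFCseq) (n m : ℕ) (x : P.Xpt) : Prop :=
  3 ^ (m - n) ≤ P.occIdx n m x + 100

end NFCseq

/-- The nearly finite Chacon transformation `T` together with its invariant measure `μ`. -/
structure NFC extends NFCseq where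
  T : toNFCseq.Xpt → toNFCseq.Xpt
  μ : Measure toNFCseq.Xpt
  T_inj : Function.Injective T
  T_range : Set.range T = {toNFCseq.zeroPt}ᶜ
  T_up : ∀ x : toNFCseq.Xpt, ∃ N : ℕ, ∀ n, N ≤ n →
    ∃ j : ℕ, x.1 n = some j ∧ (T x).1 n = some (j + 1)
  T_meas : Measurable T
  μ_level : ∀ n j : ℕ, j < toNFCseq.hgt n →
    μ (toNFCseq.level n j) = (3 : ℝ≥0∞)⁻¹ ^ n
  μ_pres : MeasurePreserving T μ μ
  μ_sfin : SigmaFinite μ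

namespace NFC

/-- `X^d`. -/
abbrev Xd (S : NFC) (d : ℕ) : Type := Fin d → S.toNFCseq.Xpt

/-- The Cartesian power `T^{×d}`. -/
def Td (S : NFC) (d : ℕ) : S.Xd d → S.Xd d := fun y i => S.T (y i)

/-- `C_n^d`. -/
def towerD (S : NFC) (d n : ℕ) : Set (S.Xd d) := {y | ∀ i, y i ∈ S.toNFCseq.tower n}

/-- `B` is an `n`-box. -/
def IsNBox (S : NFC) (d n : ℕ) (B : Set (S.Xd d)) : Prop :=
  ∃ v : Fin d → ℕ, (∀ i, v i < S.toNFCseq.hgt n) ∧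
    B = {y : S.Xd d | ∀ i, y i ∈ S.toNFCseq.level n (v i)}

/-- A measure on `X^d` is Radon iff it is finite on each `C_n^d`. -/
def IsRadon (S : NFC) (d : ℕ) (σ : Measure (S.Xd d)) : Prop :=
  ∀ n, σ (S.towerD d n) < ⊤

/-- `σ` is `T^{×d}`-invariant. -/
def InvariantD (S : NFC) (d : ℕ) (σ : Measure (S.Xd d)) : Prop :=
  ∀ A : Set (S.Xd d), MeasurableSet A → σ ((S.Td d) ⁻¹' A) = σ A

/-- `T^{-e} A`, the preimage of `A` under `T^e` for `e ∈ ℤ` (image for negative `e`). -/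
def preT (S : NFC) : ℤ → Set S.toNFCseq.Xpt → Set S.toNFCseq.Xpt
  | Int.ofNat k, A => S.T^[k] ⁻¹' A
  | Int.negSucc k, A => S.T^[k + 1] '' A

/-- `σ` is a graph measure arising from powers of `T` on `X^ι`:
`σ(∏ᵢ Aᵢ) = α · μ(⋂ᵢ T^{-eᵢ} Aᵢ)`. -/
def IsGraphMeasure (S : NFC) {ι : Type} (σ : Measure (ι → S.toNFCseq.Xpt)) : Prop :=
  ∃ α : ℝ≥0∞, 0 < α ∧ α ≠ ⊤ ∧ ∃ e : ι → ℤ,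
    ∀ A : ι → Set S.toNFCseq.Xpt, (∀ i, MeasurableSet (A i)) →
      σ (Set.univ.pi A) = α * S.μ (⋂ i, S.preT (e i) (A i))

/-- `σ = σ^{D_1} ⊗ ⋯ ⊗ σ^{D_r}` for a partition `D_1, …, D_r` of `{1,…,d}` where each
`σ^{D_j}` is a graph measure on `X^{D_j}` arising from powers of `T`. -/
def IsProductOfGraphMeasures (S : NFC) (d : ℕ) (σ : Measure (S.Xd d)) : Prop :=
  ∃ (r : ℕ) (D : Fin r → Finset (Fin d)),
    (∀ j, (D j).Nonempty) ∧
    (∀ j j', j ≠ j' → Disjoint (D j) (D j')) ∧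
    (∀ i : Fin d, ∃ j, i ∈ D j) ∧
    ∃ σD : ∀ j : Fin r, Measure ({i // i ∈ D j} → S.toNFCseq.Xpt),
      (∀ j, S.IsGraphMeasure (σD j)) ∧
      ∀ A : Fin d → Set S.toNFCseq.Xpt, (∀ i, MeasurableSet (A i)) →
        σ (Set.univ.pi A) =
          ∏ j : Fin r, σD j (Set.univ.pi fun i : {i // i ∈ D j} => A i.1)

end NFC


/-- `(T)^j W` for `j ∈ ℤ`: forward images for `j ≥ 0`, preimages for `j < 0`. -/
def iterZ {α : Type*} (f : α → α) : ℤ → Set α → Set α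
  | Int.ofNat k, A => f^[k] '' A
  | Int.negSucc k, A => f^[k + 1] ⁻¹' A

namespace NFC

/-- `σ` is totally dissipative: there is a wandering set `W` whose `ℤ`-orbit covers
`X^d` up to a `σ`-null set. -/
def TotallyDissipative (S : NFC) (d : ℕ) (σ : Measure (S.Xd d)) : Prop :=
  ∃ W : Set (S.Xd d), MeasurableSet W ∧
    (∀ j j' : ℤ, j ≠ j' → Disjoint (iterZ (S.Td d) j W) (iterZ (S.Td d) j' W)) ∧
    σ (⋃ j : ℤ, iterZ (S.Td d) j W)ᶜ = 0

/-- The ring `𝓡` of finite unions of `n`-boxes. -/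
def BoxRing (S : NFC) (d : ℕ) : Set (Set (S.Xd d)) :=
  {B | ∃ n : ℕ, ∃ 𝔅 : Finset (Set (S.Xd d)), (∀ b ∈ 𝔅, S.IsNBox d n b) ∧ B = ⋃₀ ↑𝔅}

/-- Convergence of a sequence of Radon measures on `X^d`. -/
def RTendsto (S : NFC) (d : ℕ) (σk : ℕ → Measure (S.Xd d)) (σ : Measure (S.Xd d)) : Prop :=
  ∀ n : ℕ, 0 < σ (S.towerD d n) →
    (∀ᶠ k in atTop, 0 < σk k (S.towerD d n)) ∧
    ∀ B : Set (S.Xd d), S.IsNBox d n B →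
      Tendsto (fun k => σk k B / σk k (S.towerD d n)) atTop
        (𝓝 (σ B / σ (S.towerD d n)))

/-- The edge `∂C_n^d` of `C_n^d`. -/
def edgeD (S : NFC) (d n : ℕ) : Set (S.Xd d) :=
  {y | y ∈ S.towerD d n ∧ ∃ i, y i ∈ S.toNFCseq.level n 0 ∨
    y i ∈ S.toNFCseq.level n (S.toNFCseq.hgt n - 1)}

/-- `Ω_m`: the union of all `m`-boxes `L_m^{j_1} × ⋯ × L_m^{j_d}` with `j_i ≠ 0` for all `i`. -/
def OmegaD (S : NFC) (d m : ℕ) : Set (S.Xd d) :=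
  {y | ∀ i, ∃ j : ℕ, j ≠ 0 ∧ j < S.toNFCseq.hgt m ∧ y i ∈ S.toNFCseq.level m j}

/-- A twisting transformation on `X^d`: it applies `T` to the coordinates in a nonempty
proper subset `G_1 ⊆ {1,…,d}` and the identity to the others. -/
def IsTwist (S : NFC) (d : ℕ) (Sw : S.Xd d → S.Xd d) : Prop :=
  ∃ G : Fin d → Bool, (∃ i, G i = true) ∧ (∃ i, G i = false) ∧
    ∀ (y : S.Xd d) (i : Fin d), Sw y i = if G i then S.T (y i) else y i

/-- The empirical measure `γ_J = ∑_{j ∈ J} δ_{(T^{×d})^j x}` along a two-sided orbit `o`. -/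
def emp (S : NFC) (d : ℕ) (o : ℤ → S.Xd d) (J : Finset ℤ) : Measure (S.Xd d) :=
  ∑ j ∈ J, Measure.dirac (o j)

end NFC

/-- `J` is a (nonempty finite) interval of `ℤ`. -/
def IsIntervalZ (J : Finset ℤ) : Prop := ∃ a b : ℤ, a ≤ b ∧ J = Finset.Icc a b

namespace NFC

/-- `J` is an `n`-crossing for the orbit `o` of a point of `X^d`: a maximal interval on which
the orbit stays in `C_n^d` with all the `t_n(T^j x_i)` constant. -/
def IsCrossing (S : NFC) (d : ℕ) (o : ℤ → S.Xd d) (n : ℕ) (J : Finset ℤ) : Prop :=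
  IsIntervalZ J ∧
  (∀ j ∈ J, o j ∈ S.towerD d n) ∧
  (∀ i : Fin d, ∀ j ∈ J, ∀ j' ∈ J, S.toNFCseq.tcol n (o j i) = S.toNFCseq.tcol n (o j' i)) ∧
  ∀ J' : Finset ℤ, J ⊆ J' → IsIntervalZ J' →
    (∀ j ∈ J', o j ∈ S.towerD d n) →
    (∀ i : Fin d, ∀ j ∈ J', ∀ j' ∈ J', S.toNFCseq.tcol n (o j i) = S.toNFCseq.tcol n (o j' i)) →
    J' = J

/-- An `n`-crossing is synchronized if `t_n(T^j x_1) = ⋯ = t_n(T^j x_d)` on it. -/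
def IsSync (S : NFC) (d : ℕ) (o : ℤ → S.Xd d) (n : ℕ) (J : Finset ℤ) : Prop :=
  ∀ j ∈ J, ∀ i i' : Fin d, S.toNFCseq.tcol n (o j i) = S.toNFCseq.tcol n (o j i')

end NFC

/-- The interval `I_n` of length `h_n` centered at `0`. -/
def Imid (P : NFCseq) (n : ℕ) : Finset ℤ :=
  Finset.Icc (-((P.hgt n / 2 : ℕ) : ℤ)) (-((P.hgt n / 2 : ℕ) : ℤ) + P.hgt n - 1)

namespace NFC

/-- A substantial `n`-crossing: an `n`-crossing whose intersection with `I_n` has at least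
`η·h_n` elements. -/
def IsSubstantial (S : NFC) (d : ℕ) (o : ℤ → S.Xd d) (η : ℝ) (n : ℕ) (J : Finset ℤ) : Prop :=
  S.IsCrossing d o n J ∧ η * S.toNFCseq.hgt n ≤ ((J ∩ Imid S.toNFCseq n).card : ℝ)

/-- `x_i` climbs into tower `n` along the interval `I`. -/
def Climbs (S : NFC) (d : ℕ) (o : ℤ → S.Xd d) (i : Fin d) (n : ℕ) (I : Finset ℤ) : Prop :=
  (∀ j ∈ I, (o j) i ∈ S.toNFCseq.tower n) ∧
  ¬ ∃ j : ℤ, j ∈ I ∧ j + 1 ∈ I ∧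
      (o j) i ∈ S.toNFCseq.level n (S.toNFCseq.hgt n - 1) ∧
      (o (j + 1)) i ∈ S.toNFCseq.level n 0

end NFC

/-- The nearly finite Chacon system together with the conull set `X_∞` and the function
`x ↦ ℓ(x)` of Lemma 2.3. -/
structure NFCX extends NFC where
  Xinf : Set toNFCseq.Xpt
  ellx : toNFCseq.Xpt → ℕ
  Xinf_conull : μ Xinfᶜ = 0
  Xinf_spec : ∀ x ∈ Xinf, ∀ ℓ : ℕ, ellx x ≤ ℓ → ∀ n : ℕ,
    nseq (ℓ - 1) ≤ n → n + ℓ ≤ nseq ℓ →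
      x ∈ toNFCseq.tower n ∧ ¬ toNFCseq.inFirstHundred n (nseq ℓ) x ∧
        ¬ toNFCseq.inLastHundred n (nseq ℓ) x

namespace NFCX

/-- `o` is the two-sided orbit of a `σ`-typical point `x = o 0` (satisfying
conditions (1), (2) and (3) of Section 3.4 of the paper). -/
def IsTypicalOrbit (S : NFCX) (d : ℕ) (σ : Measure (S.toNFC.Xd d))
    (o : ℤ → S.toNFC.Xd d) : Prop :=
  (∀ j : ℤ, S.toNFC.Td d (o j) = o (j + 1)) ∧
  (∀ j : ℤ, ∀ n : ℕ, 0 < σ (S.toNFC.towerD d n) →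
    ∀ B : Set (S.toNFC.Xd d), S.toNFC.IsNBox d n B →
    ∀ a b : ℕ → ℤ, (∀ k, a k ≤ 0) → (∀ k, 0 ≤ b k) →
      Tendsto (fun k => b k - a k) atTop atTop →
      Tendsto (fun k =>
          (((Finset.Icc (a k) (b k)).filter (fun j' => o (j + j') ∈ B)).card : ℝ) /
            (((Finset.Icc (a k) (b k)).filter
              (fun j' => o (j + j') ∈ S.toNFC.towerD d n)).card : ℝ))
        atTop (𝓝 ((σ B).toReal / (σ (S.toNFC.towerD d n)).toReal))) ∧
  (∀ n : ℕ, ∀ B : Set (S.toNFC.Xd d), S.toNFC.IsNBox d n B → o 0 ∈ B → 0 < σ B) ∧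
  (∀ i : Fin d, (o 0) i ∈ S.Xinf)

end NFCX

/-! ## Subsets of `ℤ` of order `ℓ` inside an interval -/

/-- A piece of `F ∩ I`: a maximal interval included in `F ∩ I`. -/
def IsPieceZ (F : Set ℤ) (I : Finset ℤ) (J : Finset ℤ) : Prop :=
  IsIntervalZ J ∧ (↑J : Set ℤ) ⊆ F ∩ ↑I ∧
    ∀ J' : Finset ℤ, IsIntervalZ J' → (↑J' : Set ℤ) ⊆ F ∩ ↑I → J ⊆ J' → J' = J

/-- A hole of `F ∩ I`: a maximal interval included in `I \ F`. -/
def IsHoleZ (F : Set ℤ) (I : Finset ℤ) (J : Finset ℤ) : Prop :=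
  IsIntervalZ J ∧ (↑J : Set ℤ) ⊆ (↑I : Set ℤ) \ F ∧
    ∀ J' : Finset ℤ, IsIntervalZ J' → (↑J' : Set ℤ) ⊆ (↑I : Set ℤ) \ F → J ⊆ J' → J' = J

/-- Each hole of `F ∩ I` has size at most `s`. -/
def HolesSmall (F : Set ℤ) (I : Finset ℤ) (s : ℕ) : Prop :=
  ∀ H : Finset ℤ, IsHoleZ F I H → H.card ≤ s

/-- Two consecutive holes of `F ∩ I` are always separated by a piece of size at least `c`. -/
def HolesSeparated (F : Set ℤ) (I : Finset ℤ) (c : ℕ) : Prop :=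
  ∀ H₁ H₂ : Finset ℤ, IsHoleZ F I H₁ → IsHoleZ F I H₂ →
    (∀ a ∈ H₁, ∀ b ∈ H₂, a < b) →
    ∃ J : Finset ℤ, IsPieceZ F I J ∧ c ≤ J.card ∧ ∀ a ∈ H₁, ∀ b ∈ H₂, ∀ x ∈ J, a < x ∧ x < b

/-- `F` is of order `ℓ ≥ 1` inside the interval `I`, with respect to the sequences `c`, `s`. -/
def IsOrder (c s : ℕ → ℕ) : ℕ → Set ℤ → Finset ℤ → Prop
  | 0, _, _ => False
  | 1, F, I => HolesSmall F I (s 1) ∧ HolesSeparated F I (c 1)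
  | (ℓ + 2), F, I => ∃ F' : Set ℤ, F ⊆ F' ∧ HolesSmall F' I (s (ℓ + 2)) ∧
      HolesSeparated F' I (c (ℓ + 2)) ∧
      ∀ J : Finset ℤ, IsPieceZ F' I J → IsOrder c s (ℓ + 1) F J

/-- `p_1`: the smallest integer such that `3^{p_1} > 2d+1` and `p_1 > d`. -/
def pOne (d : ℕ) : ℕ := sInf {p : ℕ | 2 * d + 1 < 3 ^ p ∧ d < p}

/-- `p_2`: the smallest integer such that `1/3^{p_2} < η/3`. -/
def pTwo (η : ℝ) : ℕ := sInf {p : ℕ | ((3 : ℝ) ^ p)⁻¹ < η / 3}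


/-! ### Levels of consecutive towers -/

namespace NFCseq

variable (P : NFCseq)

theorem hgt_succ (n : ℕ) : P.hgt (n + 1) = 3 * P.hgt n + 3 * P.spa n + 1 := by
  rw [hgt]; rfl

theorem pmap_eq_some {n q p : ℕ} (hq : P.pmap n q = some p) :
    p < P.hgt n ∧ (q = p ∨ q = P.hgt n + P.spa n + p ∨
      q = 2 * P.hgt n + 2 * P.spa n + 1 + p) := by
  unfold pmap at hq
  split_ifs at hq <;> simp only [Option.some.injEq] at hq <;> omega

theorem pmap_fst {n p : ℕ} (hp : p < P.hgt n) : P.pmap n p = some p := by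
  unfold pmap; simp [hp]

theorem pmap_snd {n p : ℕ} (hp : p < P.hgt n) :
    P.pmap n (P.hgt n + P.spa n + p) = some p := by
  unfold pmap
  rw [if_neg (by omega), if_neg (by omega), if_pos (by omega)]
  congr 1; omega

theorem pmap_trd {n p : ℕ} (hp : p < P.hgt n) :
    P.pmap n (2 * P.hgt n + 2 * P.spa n + 1 + p) = some p := by
  unfold pmap
  rw [if_neg (by omega), if_neg (by omega), if_neg (by omega), if_neg (by omega),
    if_pos (by omega)]
  congr 1; omega

variable {P}

theorem lt_hgt {x : P.Xpt} {n p : ℕ} (hx : x.1 n = some p) : p < P.hgt n := by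
  have h := x.2.1 n
  rw [hx] at h
  obtain ⟨q, -, hq⟩ := Option.bind_eq_some_iff.mp h.symm
  exact (P.pmap_eq_some hq).1

/-- The three possible positions in tower `n + 1` of a point of level `p` of tower `n`,
together with the corresponding subcolumn. -/
theorem exists_succ {x : P.Xpt} {n p : ℕ} (hx : x.1 n = some p) :
    (x.1 (n + 1) = some p ∧ P.tcol n x = 1) ∨
    (x.1 (n + 1) = some (P.hgt n + P.spa n + p) ∧ P.tcol n x = 2) ∨
    (x.1 (n + 1) = some (2 * P.hgt n + 2 * P.spa n + 1 + p) ∧ P.tcol n x = 3) := by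
  have h := x.2.1 n
  rw [hx] at h
  obtain ⟨q, hq, hqp⟩ := Option.bind_eq_some_iff.mp h.symm
  obtain ⟨hp, rfl | rfl | rfl⟩ := P.pmap_eq_some hqp
  · left; refine ⟨hq, ?_⟩
    unfold tcol; rw [hq]; dsimp only
    rw [if_pos (by omega)]
  · right; left; refine ⟨hq, ?_⟩
    unfold tcol; rw [hq]; dsimp only
    rw [if_neg (by omega), if_pos (by omega)]
  · right; right; refine ⟨hq, ?_⟩
    unfold tcol; rw [hq]; dsimp only
    rw [if_neg (by omega), if_neg (by omega)]

theorem of_fst {x : P.Xpt} {n p : ℕ} (hp : p < P.hgt n) (hx : x.1 (n + 1) = some p) :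
    x.1 n = some p ∧ P.tcol n x = 1 := by
  constructor
  · rw [x.2.1 n, hx]; exact P.pmap_fst hp
  · unfold tcol; rw [hx]; dsimp only
    rw [if_pos (by omega)]

theorem of_snd {x : P.Xpt} {n p : ℕ} (hp : p < P.hgt n)
    (hx : x.1 (n + 1) = some (P.hgt n + P.spa n + p)) :
    x.1 n = some p ∧ P.tcol n x = 2 := by
  constructor
  · rw [x.2.1 n, hx]; exact P.pmap_snd hp
  · unfold tcol; rw [hx]; dsimp only
    rw [if_neg (by omega), if_pos (by omega)]

theorem of_trd {x : P.Xpt} {n p : ℕ} (hp : p < P.hgt n)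
    (hx : x.1 (n + 1) = some (2 * P.hgt n + 2 * P.spa n + 1 + p)) :
    x.1 n = some p ∧ P.tcol n x = 3 := by
  constructor
  · rw [x.2.1 n, hx]; exact P.pmap_trd hp
  · unfold tcol; rw [hx]; dsimp only
    rw [if_neg (by omega), if_neg (by omega)]

theorem occIdx_succ {m N : ℕ} (hmN : m < N) (x : P.Xpt) :
    P.occIdx m N x = (P.tcol m x - 1) + 3 * P.occIdx (m + 1) N x := by
  unfold occIdx
  rw [Finset.sum_eq_sum_Ico_succ_bot hmN, Finset.mul_sum]
  congr 1
  · simp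
  · refine Finset.sum_congr rfl fun r hr => ?_
    have : r - m = (r - (m + 1)) + 1 := by have := Finset.mem_Ico.mp hr; omega
    rw [this, pow_succ]; ring

/-! ### Growth of the heights -/

theorem nseq_strictMono : StrictMono P.nseq :=
  strictMono_nat_of_lt_succ fun n => by
    have := P.nseq_growth (n + 1) (by omega)
    simp only [Nat.add_sub_cancel] at this
    omega

theorem spa_nseq {m : ℕ} (hm : 1 ≤ m) :
    P.spa (P.nseq m) = P.hgt (P.nseq m - P.kOf m) := by
  have hn : ∃ ℓ, 1 ≤ ℓ ∧ P.nseq ℓ = P.nseq m := ⟨m, hm, rfl⟩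
  unfold spa
  rw [dif_pos hn, nseq_strictMono.injective (Nat.find_spec hn).2]

theorem spa_eq_zero {m r : ℕ} (h1 : P.nseq m < r) (h2 : r < P.nseq (m + 1)) :
    P.spa r = 0 := by
  unfold spa
  rw [dif_neg]
  rintro ⟨ℓ, -, rfl⟩
  have := nseq_strictMono.lt_iff_lt.mp h1
  have := nseq_strictMono.lt_iff_lt.mp h2
  omega

theorem pow_mul_hgt_le (n k : ℕ) : 3 ^ k * P.hgt n ≤ P.hgt (n + k) := by
  induction k with
  | zero => simp
  | succ k ih =>
    have := P.hgt_succ (n + k)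
    rw [← add_assoc, this, pow_succ]
    linarith

theorem kOf_bdd (ℓ : ℕ) : ∀ k ∈ {k | P.lseq k ≤ ℓ}, k ≤ ℓ := fun _ hk =>
  (P.lseq_strictMono.le_apply).trans hk

theorem kOf_le {ℓ : ℕ} (hℓ : 1 ≤ ℓ) : P.kOf ℓ ≤ ℓ :=
  csSup_le ⟨0, by simpa [P.lseq_zero] using hℓ⟩ (kOf_bdd ℓ)

theorem le_kOf {ℓ K : ℕ} (h : P.lseq K ≤ ℓ) : K ≤ P.kOf ℓ :=
  le_csSup ⟨ℓ, kOf_bdd ℓ⟩ h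

/-- The spacers `h_{n-k(m)}` are short compared with `h_n`, for `n = n_m`. -/
theorem pow_mul_spa_le {m K : ℕ} (hm : 1 ≤ m) (h : P.lseq K ≤ m) :
    3 ^ K * P.spa (P.nseq m) ≤ P.hgt (P.nseq m) := by
  have h1 : P.kOf m ≤ P.nseq m := (kOf_le hm).trans nseq_strictMono.le_apply
  have h2 := pow_mul_hgt_le (P := P) (P.nseq m - P.kOf m) (P.kOf m)
  rw [Nat.sub_add_cancel h1] at h2
  rw [spa_nseq hm]
  refine le_trans (Nat.mul_le_mul_right _ ?_) h2
  exact Nat.pow_le_pow_right (by norm_num) (le_kOf h)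

theorem spa_pos {m : ℕ} (hm : 1 ≤ m) : 1 ≤ P.spa (P.nseq m) := by
  rw [spa_nseq hm]; exact P.hgt_pos _

end NFCseq

/-! ### Occurrences of a tower along an orbit -/

namespace NFC

variable {S : NFC}

/-- `T` climbs one level in every tower where the point is not at the top. -/
theorem step_up (x : S.toNFCseq.Xpt) {n p : ℕ} (hx : x.1 n = some p)
    (hp : p + 1 < S.toNFCseq.hgt n) : (S.T x).1 n = some (p + 1) := by
  obtain ⟨N, hN⟩ := S.T_up x
  -- Far up, `T` adds one to the index; this property descends from tower `n + 1` to tower `n`.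
  suffices H : ∀ k n p, N ≤ n + k → x.1 n = some p → p + 1 < S.toNFCseq.hgt n →
      (S.T x).1 n = some (p + 1) from H N n p (by omega) hx hp
  intro k
  induction k with
  | zero =>
    intro n p hn hx _
    obtain ⟨j, h1, h2⟩ := hN n hn
    rw [hx] at h1
    obtain rfl : p = j := by simpa using h1
    exact h2
  | succ k ih =>
    intro n p hn hx hp
    have hs := S.toNFCseq.hgt_succ n
    rcases NFCseq.exists_succ hx with ⟨h, -⟩ | ⟨h, -⟩ | ⟨h, -⟩
    · exact (NFCseq.of_fst hp (ih (n + 1) _ (by omega) h (by omega))).1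
    · have h' := ih (n + 1) _ (by omega) h (by omega)
      exact (NFCseq.of_snd hp h').1
    · have h' := ih (n + 1) _ (by omega) h (by omega)
      exact (NFCseq.of_trd hp h').1

theorem step_down (x : S.toNFCseq.Xpt) {n p : ℕ} (hx : (S.T x).1 n = some (p + 1)) :
    x.1 n = some p := by
  obtain ⟨N, hN⟩ := S.T_up x
  suffices H : ∀ k n p, N ≤ n + k → (S.T x).1 n = some (p + 1) → x.1 n = some p from
    H N n p (by omega) hx
  intro k
  induction k with
  | zero =>
    intro n p hn hx
    obtain ⟨j, h1, h2⟩ := hN n hn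
    rw [hx] at h2
    obtain rfl : p = j := by simpa using h2
    exact h1
  | succ k ih =>
    intro n p hn hx
    have hp := NFCseq.lt_hgt hx
    rcases NFCseq.exists_succ hx with ⟨h, -⟩ | ⟨h, -⟩ | ⟨h, -⟩
    · exact (NFCseq.of_fst (by omega) (ih (n + 1) _ (by omega) h)).1
    · exact (NFCseq.of_snd (by omega) (ih (n + 1) (_ + p) (by omega) h)).1
    · exact (NFCseq.of_trd (by omega) (ih (n + 1) (_ + p) (by omega) h)).1

/-- An occurrence of tower `m` along the orbit `y` starts at time `s`: the orbit climbs through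
all levels of tower `m` during `[s, s + h_m)`. -/
def Occ (S : NFC) (y : ℤ → S.toNFCseq.Xpt) (m : ℕ) (s : ℤ) : Prop :=
  ∀ q : ℕ, q < S.toNFCseq.hgt m → (y (s + q)).1 m = some q

/-- An occurrence of tower `m` starts at time `s` and lies in subcolumn `t`. -/
def OccT (S : NFC) (y : ℤ → S.toNFCseq.Xpt) (m t : ℕ) (s : ℤ) : Prop :=
  ∀ q : ℕ, q < S.toNFCseq.hgt m →
    (y (s + q)).1 m = some q ∧ S.toNFCseq.tcol m (y (s + q)) = t

variable {y : ℤ → S.toNFCseq.Xpt}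

theorem at_eq {m : ℕ} {j j' : ℤ} {a : Option ℕ} (h : (y j).1 m = a) (e : j' = j) :
    (y j').1 m = a := e ▸ h

theorem OccT.occ {m t : ℕ} {s : ℤ} (h : S.OccT y m t s) : S.Occ y m s := fun q hq => (h q hq).1

theorem Occ.fst {m : ℕ} {s : ℤ} (h : S.Occ y (m + 1) s) : S.OccT y m 1 s := fun q hq => by
  have hs := S.toNFCseq.hgt_succ m
  exact NFCseq.of_fst hq (h q (by omega))

theorem Occ.snd {m : ℕ} {s s' : ℤ} (h : S.Occ y (m + 1) s)
    (hs' : s' = s + (S.toNFCseq.hgt m + S.toNFCseq.spa m)) : S.OccT y m 2 s' := fun q hq => by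
  have hs := S.toNFCseq.hgt_succ m
  have := h (S.toNFCseq.hgt m + S.toNFCseq.spa m + q) (by omega)
  exact NFCseq.of_snd hq (at_eq this (by rw [hs']; push_cast; ring))

theorem Occ.trd {m : ℕ} {s s' : ℤ} (h : S.Occ y (m + 1) s)
    (hs' : s' = s + (2 * S.toNFCseq.hgt m + 2 * S.toNFCseq.spa m + 1)) :
    S.OccT y m 3 s' := fun q hq => by
  have hs := S.toNFCseq.hgt_succ m
  have := h (2 * S.toNFCseq.hgt m + 2 * S.toNFCseq.spa m + 1 + q) (by omega)
  exact NFCseq.of_trd hq (at_eq this (by rw [hs']; push_cast; ring))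

/-- An orbit at level `p` of tower `m` at time `j` climbs through the whole tower, starting at
time `j - p`. -/
theorem occ_of_mem (hy : ∀ j, S.T (y j) = y (j + 1)) {m p : ℕ} {j : ℤ}
    (h : (y j).1 m = some p) : S.Occ y m (j - p) := by
  have hup : ∀ k : ℕ, p + k < S.toNFCseq.hgt m → (y (j + k)).1 m = some (p + k) := by
    intro k
    induction k with
    | zero => intro _; simpa using h
    | succ k ih =>
      intro hk
      have := step_up _ (ih (by omega)) (by omega)
      rw [hy] at this
      exact at_eq this (by push_cast; ring)
  have hdn : ∀ k : ℕ, k ≤ p → (y (j - k)).1 m = some (p - k) := by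
    intro k
    induction k with
    | zero => intro _; simpa using h
    | succ k ih =>
      intro hk
      apply step_down
      rw [hy]
      have := ih (by omega)
      rw [show p - (k + 1) + 1 = p - k by omega]
      exact at_eq this (by push_cast; ring)
  intro q hq
  rcases le_total p q with hpq | hpq
  · obtain ⟨k, rfl⟩ := Nat.exists_eq_add_of_le hpq
    exact at_eq (hup k hq) (by push_cast; ring)
  · obtain ⟨k, rfl⟩ := Nat.exists_eq_add_of_le hpq
    have := hdn k (by omega)
    rw [Nat.add_sub_cancel] at this
    exact at_eq this (by push_cast; ring)

/-- A point of tower `m` lies in an occurrence of tower `m` on which `t_m` is constant. -/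
theorem occT_of_mem (hy : ∀ j, S.T (y j) = y (j + 1)) {m p : ℕ} {j : ℤ}
    (h : (y j).1 m = some p) : S.OccT y m (S.toNFCseq.tcol m (y j)) (j - p) := by
  rcases NFCseq.exists_succ h with ⟨h', ht⟩ | ⟨h', ht⟩ | ⟨h', ht⟩ <;> rw [ht]
  · exact (occ_of_mem hy h').fst
  · exact (occ_of_mem hy h').snd (by push_cast; ring)
  · exact (occ_of_mem hy h').trd (by push_cast; ring)

theorem Occ.disjoint {m : ℕ} {s s' : ℤ} (h : S.Occ y m s) (h' : S.Occ y m s') (hss : s < s') :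
    s + S.toNFCseq.hgt m ≤ s' := by
  by_contra hc
  obtain ⟨q, hq⟩ := Int.eq_ofNat_of_zero_le (sub_nonneg.mpr hss.le)
  have h1 := h q (by omega)
  have h2 := h' 0 (S.toNFCseq.hgt_pos m)
  rw [show s + (q : ℤ) = s' by omega] at h1
  rw [Nat.cast_zero, add_zero, h1, Option.some.injEq] at h2
  omega

/-- When spacers are placed above every subcolumn, an orbit leaving tower `n` through its top
level does not enter it again immediately. -/
theorem top_none (hy : ∀ j, S.T (y j) = y (j + 1)) {n : ℕ} (hn : 1 ≤ S.toNFCseq.spa n) {j : ℤ}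
    {p : ℕ} (h : (y j).1 n = some p) (hp : p + 1 = S.toNFCseq.hgt n) :
    (y (j + 1)).1 n = none := by
  have hs := S.toNFCseq.hgt_succ n
  have key : ∀ q, (y j).1 (n + 1) = some q → (q = p ∨ q = S.toNFCseq.hgt n + S.toNFCseq.spa n + p ∨
      q = 2 * S.toNFCseq.hgt n + 2 * S.toNFCseq.spa n + 1 + p) → (y (j + 1)).1 n = none := by
    intro q hq hc
    have h1 := step_up _ hq (by omega)
    rw [hy] at h1
    by_contra hne
    obtain ⟨r, hr⟩ := Option.ne_none_iff_exists'.mp hne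
    have hb := (y (j + 1)).2.1 n
    rw [h1, hr] at hb
    have := S.toNFCseq.pmap_eq_some hb.symm
    omega
  rcases NFCseq.exists_succ h with ⟨h', -⟩ | ⟨h', -⟩ | ⟨h', -⟩
  · exact key _ h' (by tauto)
  · exact key _ h' (by tauto)
  · exact key _ h' (by tauto)

/-- Likewise, an orbit entering tower `n` through its bottom level comes from outside. -/
theorem pred_none (hy : ∀ j, S.T (y j) = y (j + 1)) {n : ℕ} (hn : 1 ≤ S.toNFCseq.spa n)
    {j : ℤ} (h : (y (j + 1)).1 n = some 0) : (y j).1 n = none := by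
  by_contra hne
  obtain ⟨p, hp⟩ := Option.ne_none_iff_exists'.mp hne
  by_cases hc : p + 1 < S.toNFCseq.hgt n
  · have := step_up _ hp hc
    rw [hy, h] at this
    simp at this
  · have := NFCseq.lt_hgt hp
    rw [top_none hy hn hp (by omega)] at h
    simp at h

/-- If tower `m` is stacked up to tower `N` without extra spacers, then two consecutive
occurrences of tower `m` inside tower `N` are separated by at most one point. -/
theorem next_occ (hy : ∀ j, S.T (y j) = y (j + 1)) {N : ℕ} (j : ℤ) :
    ∀ k m p : ℕ, m + k = N → (∀ r, m ≤ r → r < N → S.toNFCseq.spa r = 0) →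
      (y j).1 m = some p → S.toNFCseq.occIdx m N (y j) + 1 < 3 ^ k →
      ∃ g : ℕ, g ≤ 1 ∧ S.Occ y m (j - p + S.toNFCseq.hgt m + g) := by
  intro k
  induction k with
  | zero => intro m p _ _ _ h; simp at h
  | succ k ih =>
    intro m p hN hspa hp hidx
    have hs := S.toNFCseq.hgt_succ m
    have h0 := hspa m le_rfl (by omega)
    rw [NFCseq.occIdx_succ (by omega), pow_succ] at hidx
    rcases NFCseq.exists_succ hp with ⟨h', ht⟩ | ⟨h', ht⟩ | ⟨h', ht⟩
    · exact ⟨0, by omega, ((occ_of_mem hy h').snd (by rw [h0]; push_cast; ring)).occ⟩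
    · exact ⟨1, by omega, ((occ_of_mem hy h').trd (by rw [h0]; push_cast; ring)).occ⟩
    · obtain ⟨g, hg, ho⟩ := ih (m + 1) _ (by omega) (fun r hr => hspa r (by omega)) h' (by omega)
      refine ⟨g, hg, ?_⟩
      convert ho.fst.occ using 1
      rw [hs, h0]; push_cast; ring

/-- Backward analogue of `next_occ`. -/
theorem prev_occ (hy : ∀ j, S.T (y j) = y (j + 1)) {N : ℕ} (j : ℤ) :
    ∀ k m p : ℕ, m + k = N → (∀ r, m ≤ r → r < N → S.toNFCseq.spa r = 0) →
      (y j).1 m = some p → 1 ≤ S.toNFCseq.occIdx m N (y j) →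
      ∃ g : ℕ, g ≤ 1 ∧ S.Occ y m (j - p - S.toNFCseq.hgt m - g) := by
  intro k
  induction k with
  | zero =>
    intro m p hN _ _ h
    obtain rfl : m = N := by omega
    simp [NFCseq.occIdx] at h
  | succ k ih =>
    intro m p hN hspa hp hidx
    have hs := S.toNFCseq.hgt_succ m
    have h0 := hspa m le_rfl (by omega)
    rw [NFCseq.occIdx_succ (by omega)] at hidx
    rcases NFCseq.exists_succ hp with ⟨h', ht⟩ | ⟨h', ht⟩ | ⟨h', ht⟩
    · obtain ⟨g, hg, ho⟩ := ih (m + 1) _ (by omega) (fun r hr => hspa r (by omega)) h' (by omega)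
      refine ⟨g, hg, (ho.trd ?_).occ⟩
      rw [hs, h0]; push_cast; ring
    · refine ⟨0, by omega, ?_⟩
      convert (occ_of_mem hy h').fst.occ using 1
      rw [h0]; push_cast; ring
    · exact ⟨1, by omega, ((occ_of_mem hy h').snd (by rw [h0]; push_cast; ring)).occ⟩

/-- The occurrence of tower `n` following the one of `y j`: it lies in another subcolumn, and
the gap has length `spa n` or `spa n + 1`. -/
theorem next_occT (hy : ∀ j, S.T (y j) = y (j + 1)) {n N : ℕ} (hnN : n < N) {j : ℤ} {p : ℕ}
    (hspa : ∀ r, n + 1 ≤ r → r < N → S.toNFCseq.spa r = 0) (hp : (y j).1 n = some p)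
    (hidx : S.toNFCseq.occIdx n N (y j) + 1 < 3 ^ (N - n)) :
    ∃ g t : ℕ, g ≤ S.toNFCseq.spa n + 1 ∧ t ≠ S.toNFCseq.tcol n (y j) ∧
      S.OccT y n t (j - p + S.toNFCseq.hgt n + g) := by
  have hs := S.toNFCseq.hgt_succ n
  have hpow : 3 ^ (N - n) = 3 ^ (N - (n + 1)) * 3 := by
    rw [← pow_succ]; congr 1; omega
  rw [NFCseq.occIdx_succ hnN, hpow] at hidx
  rcases NFCseq.exists_succ hp with ⟨h', ht⟩ | ⟨h', ht⟩ | ⟨h', ht⟩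
  · exact ⟨S.toNFCseq.spa n, 2, by omega, by omega,
      (occ_of_mem hy h').snd (by ring)⟩
  · exact ⟨S.toNFCseq.spa n + 1, 3, by omega, by omega,
      (occ_of_mem hy h').trd (by push_cast; ring)⟩
  · obtain ⟨g, hg, ho⟩ := next_occ hy (N := N) j (N - (n + 1)) (n + 1) _ (by omega) hspa h'
      (by omega)
    refine ⟨S.toNFCseq.spa n + g, 1, by omega, by omega, ?_⟩
    convert ho.fst using 1
    rw [hs]; push_cast; ring

/-- Backward analogue of `next_occT`. -/
theorem prev_occT (hy : ∀ j, S.T (y j) = y (j + 1)) {n N : ℕ} (hnN : n < N) {j : ℤ} {p : ℕ}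
    (hspa : ∀ r, n + 1 ≤ r → r < N → S.toNFCseq.spa r = 0) (hp : (y j).1 n = some p)
    (hidx : 1 ≤ S.toNFCseq.occIdx n N (y j)) :
    ∃ g t : ℕ, g ≤ S.toNFCseq.spa n + 1 ∧ t ≠ S.toNFCseq.tcol n (y j) ∧
      S.OccT y n t (j - p - S.toNFCseq.hgt n - g) := by
  have hs := S.toNFCseq.hgt_succ n
  rw [NFCseq.occIdx_succ hnN] at hidx
  rcases NFCseq.exists_succ hp with ⟨h', ht⟩ | ⟨h', ht⟩ | ⟨h', ht⟩
  · obtain ⟨g, hg, ho⟩ := prev_occ hy (N := N) j (N - (n + 1)) (n + 1) _ (by omega) hspa h'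
      (by omega)
    refine ⟨S.toNFCseq.spa n + g, 3, by omega, by omega, ho.trd ?_⟩
    rw [hs]; push_cast; ring
  · refine ⟨S.toNFCseq.spa n, 1, by omega, by omega, ?_⟩
    convert (occ_of_mem hy h').fst using 1
    push_cast; ring
  · exact ⟨S.toNFCseq.spa n + 1, 2, by omega, by omega,
      (occ_of_mem hy h').snd (by push_cast; ring)⟩

end NFC

/-! ### Crossings -/

namespace NFC

variable {S : NFC} {d : ℕ} {o : ℤ → S.Xd d} {n : ℕ}

/-- The interval `K` satisfies all requirements on an `n`-crossing except maximality. -/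
def Coherent (S : NFC) (d : ℕ) (o : ℤ → S.Xd d) (n : ℕ) (K : Finset ℤ) : Prop :=
  IsIntervalZ K ∧ (∀ j ∈ K, o j ∈ S.towerD d n) ∧
  ∀ i : Fin d, ∀ j ∈ K, ∀ j' ∈ K, S.toNFCseq.tcol n (o j i) = S.toNFCseq.tcol n (o j' i)

theorem IsCrossing.coherent {J : Finset ℤ} (hJ : S.IsCrossing d o n J) : S.Coherent d o n J :=
  ⟨hJ.1, hJ.2.1, hJ.2.2.1⟩

/-- A crossing contains every coherent interval that it meets. -/
theorem IsCrossing.subset {J K : Finset ℤ} (hJ : S.IsCrossing d o n J)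
    (hK : S.Coherent d o n K) {j : ℤ} (hjJ : j ∈ J) (hjK : j ∈ K) : K ⊆ J := by
  obtain ⟨hJi, hJt, hJc, hmax⟩ := hJ
  obtain ⟨hKi, hKt, hKc⟩ := hK
  have hun : J ∪ K = J := by
    refine hmax (J ∪ K) Finset.subset_union_left ?_ ?_ ?_
    · obtain ⟨a, b, hab, rfl⟩ := hJi
      obtain ⟨a', b', hab', rfl⟩ := hKi
      refine ⟨min a a', max b b', by omega, ?_⟩
      ext z
      simp only [Finset.mem_union, Finset.mem_Icc] at *
      omega
    · intro z hz
      rcases Finset.mem_union.mp hz with hz | hz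
      exacts [hJt z hz, hKt z hz]
    · have key : ∀ i, ∀ z ∈ J ∪ K,
          S.toNFCseq.tcol n (o z i) = S.toNFCseq.tcol n (o j i) := by
        intro i z hz
        rcases Finset.mem_union.mp hz with hz | hz
        exacts [hJc i z hz j hjJ, hKc i z hz j hjK]
      intro i z hz z' hz'
      rw [key i z hz, key i z' hz']
  exact Finset.union_eq_left.mp hun

theorem IsCrossing.eq {J J' K : Finset ℤ} (hJ : S.IsCrossing d o n J)
    (hJ' : S.IsCrossing d o n J') (hK : S.Coherent d o n K) {j j' : ℤ} (hj : j ∈ J)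
    (hjK : j ∈ K) (hj' : j' ∈ J') (hjK' : j' ∈ K) : J = J' := by
  have h1 : j' ∈ J := hJ.subset hK hj hjK hjK'
  exact Finset.Subset.antisymm (hJ'.subset hJ.coherent hj' h1)
    (hJ.subset hJ'.coherent h1 hj')

/-- Every point of the orbit in `C_n^d` lies in an `n`-crossing: coherent intervals around it are
bounded, since a coordinate leaves tower `n` at both ends of an occurrence. -/
theorem exists_crossing (ho : ∀ (i : Fin d) j, S.T (o j i) = o (j + 1) i) (hd : 0 < d)
    (hn : 1 ≤ S.toNFCseq.spa n) {j : ℤ} (hj : o j ∈ S.towerD d n) :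
    ∃ J, S.IsCrossing d o n J ∧ j ∈ J := by
  let i0 : Fin d := ⟨0, hd⟩
  let y : ℤ → S.toNFCseq.Xpt := fun k => o k i0
  have hy : ∀ k, S.T (y k) = y (k + 1) := ho i0
  obtain ⟨p, hp⟩ := Option.ne_none_iff_exists'.mp (hj i0)
  have hocc : S.Occ y n (j - p) := occ_of_mem hy hp
  have hph := NFCseq.lt_hgt hp
  -- The coordinate `i0` is outside tower `n` just before and just after its occurrence.
  have h1 : (y (j - p - 1)).1 n = none := by
    refine pred_none hy hn ?_
    exact at_eq (hocc 0 (S.toNFCseq.hgt_pos n)) (by push_cast; ring)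
  have h2 : (y (j - p + S.toNFCseq.hgt n)).1 n = none := by
    have := top_none hy hn (hocc (S.toNFCseq.hgt n - 1) (by omega)) (by omega)
    exact at_eq this (by omega)
  have hbd : ∀ K, S.Coherent d o n K → j ∈ K →
      K ⊆ Finset.Icc (j - p) (j - p + S.toNFCseq.hgt n) := by
    rintro K ⟨⟨a, b, -, rfl⟩, hKt, -⟩ hjK z hz
    have e1 : j - p - 1 ∉ Finset.Icc a b := fun h => hKt _ h i0 h1
    have e2 : j - p + S.toNFCseq.hgt n ∉ Finset.Icc a b := fun h => hKt _ h i0 h2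
    simp only [Finset.mem_Icc] at *
    omega
  let F := (Finset.Icc (j - p) (j - p + S.toNFCseq.hgt n)).powerset.filter
    fun K => S.Coherent d o n K ∧ j ∈ K
  have hmem : ∀ K, S.Coherent d o n K → j ∈ K → K ∈ F := fun K h h' =>
    Finset.mem_filter.mpr ⟨Finset.mem_powerset.mpr (hbd K h h'), h, h'⟩
  have hF : F.Nonempty := by
    refine ⟨{j}, hmem _ ⟨⟨j, j, le_rfl, by simp⟩, ?_, ?_⟩ (by simp)⟩
    · intro z hz; rw [Finset.mem_singleton.mp hz]; exact hj
    · intro i z hz z' hz'; rw [Finset.mem_singleton.mp hz, Finset.mem_singleton.mp hz']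
  obtain ⟨J, hJF, hJmax⟩ := Finset.exists_max_image F Finset.card hF
  obtain ⟨-, hJc, hjJ⟩ := Finset.mem_filter.mp hJF
  refine ⟨J, ⟨hJc.1, hJc.2.1, hJc.2.2, ?_⟩, hjJ⟩
  intro J' hsub hi ht hc
  exact (Finset.eq_of_subset_of_card_le hsub
    (hJmax J' (hmem J' ⟨hi, ht, hc⟩ (hsub hjJ)))).symm

/-! ### Crossings inside the central interval -/

theorem mem_Imid {P : NFCseq} {n : ℕ} {j : ℤ} : j ∈ Imid P n ↔
    -((P.hgt n / 2 : ℕ) : ℤ) ≤ j ∧ j < -((P.hgt n / 2 : ℕ) : ℤ) + P.hgt n := by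
  rw [Imid, Finset.mem_Icc]; omega

theorem card_Imid (P : NFCseq) (n : ℕ) : (Imid P n).card = P.hgt n := by
  rw [Imid, Int.card_Icc]; omega

/-- For each coordinate `i`, the central interval `I_n` is covered by an occurrence of tower `n`
ending at `a i`, in subcolumn `u i`, a gap `[a i, b i)` of length at most `G`, and an occurrence
of tower `n` starting at `b i`, in another subcolumn `v i`. -/
structure Split (S : NFC) (d : ℕ) (o : ℤ → S.Xd d) (n G : ℕ) (a b : Fin d → ℤ)
    (u v : Fin d → ℕ) : Prop where
  left : ∀ i, S.OccT (fun j => o j i) n (u i) (a i - S.toNFCseq.hgt n)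
  right : ∀ i, S.OccT (fun j => o j i) n (v i) (b i)
  ne : ∀ i, u i ≠ v i
  le : ∀ i, a i ≤ b i
  gap : ∀ i, b i ≤ a i + G
  a_le : ∀ i, a i ≤ -((S.toNFCseq.hgt n / 2 : ℕ) : ℤ) + S.toNFCseq.hgt n
  le_b : ∀ i, -((S.toNFCseq.hgt n / 2 : ℕ) : ℤ) ≤ b i

variable {G : ℕ} {a b : Fin d → ℤ} {u v : Fin d → ℕ}

theorem OccT.at {y : ℤ → S.toNFCseq.Xpt} {m t : ℕ} {s j : ℤ} (h : S.OccT y m t s)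
    (h1 : s ≤ j) (h2 : j < s + S.toNFCseq.hgt m) :
    y j ∈ S.toNFCseq.tower m ∧ S.toNFCseq.tcol m (y j) = t := by
  obtain ⟨q, hq⟩ := Int.eq_ofNat_of_zero_le (sub_nonneg.mpr h1)
  obtain ⟨h3, h4⟩ := h q (by omega)
  rw [show s + (q : ℤ) = j by omega] at h3 h4
  refine ⟨?_, h4⟩
  show (y j).1 m ≠ none
  rw [h3]; simp

namespace Split

theorem left_at (h : S.Split d o n G a b u v) {i : Fin d} {j : ℤ}
    (h1 : a i - S.toNFCseq.hgt n ≤ j) (h2 : j < a i) :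
    o j i ∈ S.toNFCseq.tower n ∧ S.toNFCseq.tcol n (o j i) = u i :=
  (h.left i).at h1 (by omega)

theorem right_at (h : S.Split d o n G a b u v) {i : Fin d} {j : ℤ}
    (h1 : b i ≤ j) (h2 : j < b i + S.toNFCseq.hgt n) :
    o j i ∈ S.toNFCseq.tower n ∧ S.toNFCseq.tcol n (o j i) = v i :=
  (h.right i).at h1 h2

theorem left_at' (h : S.Split d o n G a b u v) {i : Fin d} {j : ℤ}
    (h1 : j ∈ Imid S.toNFCseq n) (h2 : j < a i) :
    o j i ∈ S.toNFCseq.tower n ∧ S.toNFCseq.tcol n (o j i) = u i := by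
  have := h.a_le i
  rw [mem_Imid] at h1
  exact h.left_at (by omega) h2

theorem right_at' (h : S.Split d o n G a b u v) {i : Fin d} {j : ℤ}
    (h1 : j ∈ Imid S.toNFCseq n) (h2 : b i ≤ j) :
    o j i ∈ S.toNFCseq.tower n ∧ S.toNFCseq.tcol n (o j i) = v i := by
  have := h.le_b i
  rw [mem_Imid] at h1
  exact h.right_at h2 (by omega)

/-- The gap is too short to contain a point of tower `n`. -/
theorem side (h : S.Split d o n G a b u v) (ho : ∀ (i : Fin d) j, S.T (o j i) = o (j + 1) i)
    (hG : G < S.toNFCseq.hgt n) {i : Fin d} {j : ℤ} (hj : o j i ∈ S.toNFCseq.tower n) :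
    j < a i ∨ b i ≤ j := by
  by_contra! hc
  obtain ⟨p, hp⟩ := Option.ne_none_iff_exists'.mp hj
  have hph := NFCseq.lt_hgt hp
  have hocc : S.Occ (fun j => o j i) n (j - p) := occ_of_mem (y := fun j => o j i) (ho i) hp
  have h1 : (j - p) + S.toNFCseq.hgt n ≤ b i := hocc.disjoint (h.right i).occ (by omega)
  have h2 := h.gap i
  have h3 := (h.left i).occ.disjoint hocc (by omega)
  omega

theorem coherent (h : S.Split d o n G a b u v) {j j' : ℤ} (hjj : j ≤ j')
    (hs : ∀ i, (a i - S.toNFCseq.hgt n ≤ j ∧ j' < a i) ∨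
      (b i ≤ j ∧ j' < b i + S.toNFCseq.hgt n)) :
    S.Coherent d o n (Finset.Icc j j') := by
  refine ⟨⟨j, j', hjj, rfl⟩, ?_, ?_⟩
  · intro z hz i
    rw [Finset.mem_Icc] at hz
    rcases hs i with hi | hi
    · exact (h.left_at (by omega) (by omega)).1
    · exact (h.right_at (by omega) (by omega)).1
  · intro i z hz z' hz'
    rw [Finset.mem_Icc] at hz hz'
    rcases hs i with hi | hi
    · rw [(h.left_at (i := i) (j := z) (by omega) (by omega)).2,
        (h.left_at (i := i) (j := z') (by omega) (by omega)).2]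
    · rw [(h.right_at (i := i) (j := z) (by omega) (by omega)).2,
        (h.right_at (i := i) (j := z') (by omega) (by omega)).2]

/-- Two points of `I_n` which are, for every coordinate, on the same side of the gap belong to the
same crossing. -/
theorem crossing_eq (h : S.Split d o n G a b u v) {J J' : Finset ℤ}
    (hJ : S.IsCrossing d o n J) (hJ' : S.IsCrossing d o n J') {j j' : ℤ} (hj : j ∈ J)
    (hj' : j' ∈ J') (hI : j ∈ Imid S.toNFCseq n) (hI' : j' ∈ Imid S.toNFCseq n)
    (hs : ∀ i, (j < a i ∧ j' < a i) ∨ (b i ≤ j ∧ b i ≤ j')) : J = J' := by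
  rw [mem_Imid] at hI hI'
  refine hJ.eq hJ' (K := Finset.Icc (min j j') (max j j'))
    (h.coherent (by omega) fun i => ?_) hj (Finset.mem_Icc.mpr (by omega)) hj'
    (Finset.mem_Icc.mpr (by omega))
  have := h.a_le i
  have := h.le_b i
  have := hs i
  omega

/-- The points of `I_n` outside substantial crossings are either in one of the `d` gaps or in
one of at most `d + 1` non-substantial crossings, which are sorted by the number of gaps to the
left of the point. -/
theorem card_bad_le (h : S.Split d o n G a b u v)
    (ho : ∀ (i : Fin d) j, S.T (o j i) = o (j + 1) i) (hd : 0 < d)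
    (hn : 1 ≤ S.toNFCseq.spa n) {η : ℝ} (hη : 0 < η)
    (hG : (d : ℝ) * G ≤ η * S.toNFCseq.hgt n) :
    (((Imid S.toNFCseq n).filter
      (fun j => ¬ ∃ J : Finset ℤ, S.IsSubstantial d o η n J ∧ j ∈ J)).card : ℝ) ≤
      (d + 2) * η * S.toNFCseq.hgt n := by
  set bad := (Imid S.toNFCseq n).filter
      (fun j => ¬ ∃ J : Finset ℤ, S.IsSubstantial d o η n J ∧ j ∈ J) with hbad
  -- `r j` is the number of gaps to the left of `j`.
  let r : ℤ → ℕ := fun j => (Finset.univ.filter fun i => b i ≤ j).card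
  let U : ℕ → Finset ℤ := fun c =>
    bad.filter fun j => (∀ i, j < a i ∨ b i ≤ j) ∧ r j = c
  have hcov : bad ⊆ (Finset.univ.biUnion fun i => Finset.Ico (a i) (b i)) ∪
      (Finset.range (d + 1)).biUnion U := by
    intro j hj
    rw [Finset.mem_union]
    by_cases hs : ∀ i, j < a i ∨ b i ≤ j
    · right
      refine Finset.mem_biUnion.mpr ⟨r j, Finset.mem_range.mpr ?_, ?_⟩
      · have := Finset.card_le_univ (Finset.univ.filter fun i => b i ≤ j)
        rw [Fintype.card_fin] at this
        exact Nat.lt_succ_of_le this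
      · exact Finset.mem_filter.mpr ⟨hj, hs, rfl⟩
    · left
      push Not at hs
      obtain ⟨i, hi⟩ := hs
      exact Finset.mem_biUnion.mpr ⟨i, Finset.mem_univ _, Finset.mem_Ico.mpr hi⟩
  have hgap : (Finset.univ.biUnion fun i => Finset.Ico (a i) (b i)).card ≤ d * G := by
    have := Finset.card_biUnion_le_card_mul Finset.univ (fun i => Finset.Ico (a i) (b i)) G
      (fun i _ => by have := h.gap i; rw [Int.card_Ico]; omega)
    simpa using this
  have hU : ∀ c, ((U c).card : ℝ) ≤ η * S.toNFCseq.hgt n := by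
    intro c
    rcases (U c).eq_empty_or_nonempty with he | ⟨j, hj⟩
    · rw [he]; simp only [Finset.card_empty, Nat.cast_zero]; positivity
    obtain ⟨hjb, hjs, hjr⟩ := Finset.mem_filter.mp hj
    obtain ⟨hjI, hjns⟩ := Finset.mem_filter.mp hjb
    have htow : ∀ j ∈ Imid S.toNFCseq n, (∀ i, j < a i ∨ b i ≤ j) → o j ∈ S.towerD d n := by
      intro j hjI hjs i
      rcases hjs i with hi | hi
      exacts [(h.left_at' hjI hi).1, (h.right_at' hjI hi).1]
    obtain ⟨J, hJ, hjJ⟩ := exists_crossing ho hd hn (htow j hjI hjs)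
    have hJs : ((J ∩ Imid S.toNFCseq n).card : ℝ) < η * S.toNFCseq.hgt n := by
      by_contra! hc
      exact hjns ⟨J, ⟨hJ, hc⟩, hjJ⟩
    refine le_trans ?_ hJs.le
    refine Nat.cast_le.mpr (Finset.card_le_card fun z hz => ?_)
    obtain ⟨hzb, hzs, hzr⟩ := Finset.mem_filter.mp hz
    obtain ⟨hzI, -⟩ := Finset.mem_filter.mp hzb
    refine Finset.mem_inter.mpr ⟨?_, hzI⟩
    obtain ⟨J', hJ', hzJ'⟩ := exists_crossing ho hd hn (htow z hzI hzs)
    -- The sets of gaps to the left of `j` and `z` are nested and have the same cardinality.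
    have hset : (Finset.univ.filter fun i => b i ≤ j) = Finset.univ.filter fun i => b i ≤ z := by
      rcases le_total j z with hjz | hjz
      · exact Finset.eq_of_subset_of_card_le
          (Finset.monotone_filter_right _ fun i _ hi => le_trans hi hjz) (hzr.trans hjr.symm).le
      · exact (Finset.eq_of_subset_of_card_le
          (Finset.monotone_filter_right _ fun i _ hi => le_trans hi hjz)
          (hjr.trans hzr.symm).le).symm
    rw [h.crossing_eq hJ hJ' hjJ hzJ' hjI hzI fun i => ?_]
    · exact hzJ'
    · have h1 : b i ≤ j ↔ b i ≤ z := by simpa using Finset.ext_iff.mp hset i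
      have := hjs i
      have := hzs i
      have := h.le i
      omega
  have h1 : (bad.card : ℝ) ≤ (d * G : ℕ) + ∑ c ∈ Finset.range (d + 1), ((U c).card : ℝ) := by
    rw [← Nat.cast_sum, ← Nat.cast_add, Nat.cast_le]
    refine (Finset.card_le_card hcov).trans ((Finset.card_union_le _ _).trans ?_)
    exact Nat.add_le_add hgap Finset.card_biUnion_le
  have h2 : ∑ c ∈ Finset.range (d + 1), ((U c).card : ℝ) ≤
      (d + 1) * (η * S.toNFCseq.hgt n) := by
    have := Finset.sum_le_card_nsmul (Finset.range (d + 1)) (fun c => ((U c).card : ℝ)) _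
      (fun c _ => hU c)
    simpa using this
  push_cast at h1
  linarith

/-- If one coordinate changes subcolumn between two synchronized crossings, all of them do. -/
theorem cross_all (h : S.Split d o n G a b u v)
    (ho : ∀ (i : Fin d) j, S.T (o j i) = o (j + 1) i) (hG : G < S.toNFCseq.hgt n)
    {J J' : Finset ℤ} (hJ : S.IsCrossing d o n J) (hJ' : S.IsCrossing d o n J')
    (hJs : S.IsSync d o n J) (hJs' : S.IsSync d o n J') {j j' : ℤ} (hj : j ∈ J)
    (hj' : j' ∈ J') (hI : j ∈ Imid S.toNFCseq n) (hI' : j' ∈ Imid S.toNFCseq n) {i : Fin d}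
    (h1 : j < a i) (h2 : b i ≤ j') (k : Fin d) : j < a k ∧ b k ≤ j' := by
  have e1 := (h.left_at' hI h1).2
  have e2 := (h.right_at' hI' h2).2
  rw [hJs j hj i k] at e1
  rw [hJs' j' hj' i k] at e2
  have hne := h.ne i
  have := h.le i
  have := h.le k
  rcases h.side ho hG (hJ.2.1 j hj k) with hk | hk <;>
    rcases h.side ho hG (hJ'.2.1 j' hj' k) with hk' | hk'
  · have f1 := (h.left_at' hI hk).2
    have f2 := (h.left_at' hI' hk').2
    exact absurd (by rw [← e1, ← e2, f1, f2]) hne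
  · exact ⟨hk, hk'⟩
  · omega
  · have f1 := (h.right_at' hI hk).2
    have f2 := (h.right_at' hI' hk').2
    exact absurd (by rw [← e1, ← e2, f1, f2]) hne

/-- Of two distinct synchronized crossings meeting `I_n`, one is on the left of all the gaps and
the other one on the right of all the gaps. -/
theorem left_or_right (h : S.Split d o n G a b u v)
    (ho : ∀ (i : Fin d) j, S.T (o j i) = o (j + 1) i) (hG : G < S.toNFCseq.hgt n)
    {J J' : Finset ℤ} (hJ : S.IsCrossing d o n J) (hJ' : S.IsCrossing d o n J')
    (hJs : S.IsSync d o n J) (hJs' : S.IsSync d o n J') {j j' : ℤ} (hj : j ∈ J)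
    (hj' : j' ∈ J') (hI : j ∈ Imid S.toNFCseq n) (hI' : j' ∈ Imid S.toNFCseq n)
    (hne : J ≠ J') : (∀ k, j < a k ∧ b k ≤ j') ∨ (∀ k, j' < a k ∧ b k ≤ j) := by
  by_contra! hc
  refine hne (h.crossing_eq hJ hJ' hj hj' hI hI' fun i => ?_)
  by_contra hi
  have hs1 := h.side ho hG (hJ.2.1 j hj i)
  have hs2 := h.side ho hG (hJ'.2.1 j' hj' i)
  have : (j < a i ∧ b i ≤ j') ∨ (j' < a i ∧ b i ≤ j) := by omega
  rcases this with ⟨h1, h2⟩ | ⟨h1, h2⟩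
  · obtain ⟨k, hk⟩ := hc.1
    have := h.cross_all ho hG hJ hJ' hJs hJs' hj hj' hI hI' h1 h2 k
    exact absurd this.2 (not_le.mpr (hk this.1))
  · obtain ⟨k, hk⟩ := hc.2
    have := h.cross_all ho hG hJ' hJ hJs' hJs hj' hj hI' hI h1 h2 k
    exact absurd this.2 (not_le.mpr (hk this.1))

/-- If all substantial crossings are synchronized, a point between the first and the last of the
`a i` is not in a substantial crossing, because some coordinates but not all have changed subcolumn
there; the same holds for the `b i`. Hence the `a i` are close to each other, and so are the `b i`,
which makes both crossings long. -/
theorem card_ge_of_two (h : S.Split d o n G a b u v)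
    (ho : ∀ (i : Fin d) j, S.T (o j i) = o (j + 1) i) (hd : 0 < d)
    (hn : 1 ≤ S.toNFCseq.spa n) {η : ℝ} (hη : 0 < η)
    (hG : (d : ℝ) * G ≤ η * S.toNFCseq.hgt n) (hGh : G < S.toNFCseq.hgt n)
    (hsync : ∀ J, S.IsSubstantial d o η n J → S.IsSync d o n J)
    {J J' : Finset ℤ} (hJ : S.IsSubstantial d o η n J) (hJ' : S.IsSubstantial d o η n J')
    {j j' : ℤ} (hj : j ∈ J) (hj' : j' ∈ J') (hI : j ∈ Imid S.toNFCseq n)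
    (hI' : j' ∈ Imid S.toNFCseq n) (hk : ∀ k, j < a k ∧ b k ≤ j') :
    (1 - (d + 2) * η) * (S.toNFCseq.hgt n : ℝ) ≤ J.card ∧
    (1 - (d + 2) * η) * (S.toNFCseq.hgt n : ℝ) ≤ J'.card := by
  have hbad := h.card_bad_le ho hd hn hη hG
  have hmI := mem_Imid.mp hI
  have hmI' := mem_Imid.mp hI'
  have : Nonempty (Fin d) := ⟨⟨0, hd⟩⟩
  constructor
  · obtain ⟨kM, hM⟩ := Finite.exists_max a
    obtain ⟨km, hm⟩ := Finite.exists_min a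
    have hsub : Finset.Ico (a km) (a kM) ⊆ (Imid S.toNFCseq n).filter
        (fun j => ¬ ∃ J : Finset ℤ, S.IsSubstantial d o η n J ∧ j ∈ J) := by
      intro p hp
      rw [Finset.mem_Ico] at hp
      have b1 := hk km
      have b2 := hk kM
      have b3 := h.le kM
      have hpI : p ∈ Imid S.toNFCseq n := mem_Imid.mpr (by omega)
      refine Finset.mem_filter.mpr ⟨hpI, ?_⟩
      rintro ⟨K, hK, hpK⟩
      have hs := h.side ho hGh (hK.1.2.1 p hpK km)
      have := h.cross_all ho hGh hJ.1 hK.1 (hsync J hJ) (hsync K hK) hj hpK hI hpI b1.1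
        (by omega) kM
      omega
    have hc1 := Finset.card_le_card hsub
    rw [Int.card_Ico] at hc1
    have hcoh : S.Coherent d o n (Finset.Icc (a kM - S.toNFCseq.hgt n) (a km - 1)) := by
      have b1 := hk km
      have b2 := h.a_le kM
      refine h.coherent (by omega) fun i => Or.inl ?_
      have := hM i
      have := hm i
      omega
    have hjm : j ∈ Finset.Icc (a kM - S.toNFCseq.hgt n) (a km - 1) := by
      have b1 := hk km
      have b2 := h.a_le kM
      rw [Finset.mem_Icc]; omega
    have hc2 := Finset.card_le_card (hJ.1.subset hcoh hj hjm)
    rw [Int.card_Icc] at hc2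
    have hc3 : S.toNFCseq.hgt n ≤ J.card + ((Imid S.toNFCseq n).filter
        (fun j => ¬ ∃ J : Finset ℤ, S.IsSubstantial d o η n J ∧ j ∈ J)).card := by omega
    have hc4 : (S.toNFCseq.hgt n : ℝ) ≤ J.card + (((Imid S.toNFCseq n).filter
        (fun j => ¬ ∃ J : Finset ℤ, S.IsSubstantial d o η n J ∧ j ∈ J)).card : ℝ) := by
      exact_mod_cast hc3
    linarith
  · obtain ⟨kM, hM⟩ := Finite.exists_max b
    obtain ⟨km, hm⟩ := Finite.exists_min b
    have hsub : Finset.Ico (b km) (b kM) ⊆ (Imid S.toNFCseq n).filter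
        (fun j => ¬ ∃ J : Finset ℤ, S.IsSubstantial d o η n J ∧ j ∈ J) := by
      intro p hp
      rw [Finset.mem_Ico] at hp
      have b1 := hk km
      have b2 := hk kM
      have b3 := h.le km
      have hpI : p ∈ Imid S.toNFCseq n := mem_Imid.mpr (by omega)
      refine Finset.mem_filter.mpr ⟨hpI, ?_⟩
      rintro ⟨K, hK, hpK⟩
      have hs := h.side ho hGh (hK.1.2.1 p hpK kM)
      have := h.cross_all ho hGh hK.1 hJ'.1 (hsync K hK) (hsync J' hJ') hpK hj' hpI hI'
        (i := kM) (by omega) b2.2 km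
      omega
    have hc1 := Finset.card_le_card hsub
    rw [Int.card_Ico] at hc1
    have hcoh : S.Coherent d o n (Finset.Icc (b kM) (b km + S.toNFCseq.hgt n - 1)) := by
      have b1 := hk kM
      have b2 := h.le_b km
      refine h.coherent (by omega) fun i => Or.inr ?_
      have := hM i
      have := hm i
      omega
    have hjm : j' ∈ Finset.Icc (b kM) (b km + S.toNFCseq.hgt n - 1) := by
      have b1 := hk kM
      have b2 := h.le_b km
      rw [Finset.mem_Icc]; omega
    have hc2 := Finset.card_le_card (hJ'.1.subset hcoh hj' hjm)
    rw [Int.card_Icc] at hc2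
    have hc3 : S.toNFCseq.hgt n ≤ J'.card + ((Imid S.toNFCseq n).filter
        (fun j => ¬ ∃ J : Finset ℤ, S.IsSubstantial d o η n J ∧ j ∈ J)).card := by omega
    have hc4 : (S.toNFCseq.hgt n : ℝ) ≤ J'.card + (((Imid S.toNFCseq n).filter
        (fun j => ¬ ∃ J : Finset ℤ, S.IsSubstantial d o η n J ∧ j ∈ J)).card : ℝ) := by
      exact_mod_cast hc3
    linarith

end Split

theorem IsSubstantial.exists_mem {η : ℝ} (hη : 0 < η) {J : Finset ℤ}
    (hJ : S.IsSubstantial d o η n J) : ∃ j, j ∈ J ∧ j ∈ Imid S.toNFCseq n := by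
  have h1 : 0 < η * S.toNFCseq.hgt n :=
    mul_pos hη (Nat.cast_pos.mpr (S.toNFCseq.hgt_pos n))
  have h2 : 0 < (J ∩ Imid S.toNFCseq n).card := by exact_mod_cast h1.trans_le hJ.2
  obtain ⟨j, hj⟩ := Finset.card_pos.mp h2
  exact ⟨j, Finset.mem_inter.mp hj⟩

/-- The conclusion of the theorem, for an `n` such that each coordinate splits `I_n` around a
short gap. -/
theorem Split.conclusion {G : ℕ} {a b : Fin d → ℤ} {u v : Fin d → ℕ}
    (h : S.Split d o n G a b u v)
    (ho : ∀ (i : Fin d) j, S.T (o j i) = o (j + 1) i) (hd : 0 < d)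
    (hn : 1 ≤ S.toNFCseq.spa n) {η : ℝ} (hη : 0 < η) (hη' : (d + 2) * η < 1)
    (hG : (d : ℝ) * G ≤ η * S.toNFCseq.hgt n) (hGh : G < S.toNFCseq.hgt n) :
    ((1 - (d + 2) * η) * (S.toNFCseq.hgt n : ℝ) ≤
        (((Imid S.toNFCseq n).filter
          (fun j => ∃ J : Finset ℤ, S.IsSubstantial d o η n J ∧ j ∈ J)).card : ℝ)) ∧
      (∃ J : Finset ℤ, S.IsSubstantial d o η n J) ∧
      ((∀ J : Finset ℤ, S.IsSubstantial d o η n J → S.IsSync d o n J) →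
        (∀ J : Finset ℤ, S.IsSubstantial d o η n J →
          (1 - (d + 2) * η) * (S.toNFCseq.hgt n : ℝ) ≤ (J.card : ℝ)) ∧
        (∀ J₁ J₂ J₃ : Finset ℤ, S.IsSubstantial d o η n J₁ → S.IsSubstantial d o η n J₂ →
          S.IsSubstantial d o η n J₃ → J₁ = J₂ ∨ J₁ = J₃ ∨ J₂ = J₃)) := by
  have hpos : (0 : ℝ) < S.toNFCseq.hgt n := Nat.cast_pos.mpr (S.toNFCseq.hgt_pos n)
  have hcov : (1 - (d + 2) * η) * (S.toNFCseq.hgt n : ℝ) ≤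
        (((Imid S.toNFCseq n).filter
          (fun j => ∃ J : Finset ℤ, S.IsSubstantial d o η n J ∧ j ∈ J)).card : ℝ) := by
    have hbad := h.card_bad_le ho hd hn hη hG
    have hsum := Finset.card_filter_add_card_filter_not (s := Imid S.toNFCseq n)
      (fun j => ∃ J : Finset ℤ, S.IsSubstantial d o η n J ∧ j ∈ J)
    rw [card_Imid] at hsum
    have hsum' := congrArg (Nat.cast (R := ℝ)) hsum
    push_cast at hsum'
    linarith
  refine ⟨hcov, ?_, fun hsync => ⟨fun J hJ => ?_, fun J₁ J₂ J₃ h1 h2 h3 => ?_⟩⟩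
  · have h1 : (0 : ℝ) < (1 - (d + 2) * η) * (S.toNFCseq.hgt n : ℝ) :=
      mul_pos (by linarith) hpos
    have h2 := h1.trans_le hcov
    rw [Nat.cast_pos, Finset.card_pos] at h2
    obtain ⟨j, hj⟩ := h2
    obtain ⟨J, hJ, -⟩ := (Finset.mem_filter.mp hj).2
    exact ⟨J, hJ⟩
  · by_cases hone : ∀ J', S.IsSubstantial d o η n J' → J = J'
    · refine hcov.trans (Nat.cast_le.mpr (Finset.card_le_card fun j hj => ?_))
      obtain ⟨J', hJ', hj'⟩ := (Finset.mem_filter.mp hj).2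
      rw [hone J' hJ']; exact hj'
    · push Not at hone
      obtain ⟨J', hJ', hne⟩ := hone
      obtain ⟨j, hj, hI⟩ := hJ.exists_mem hη
      obtain ⟨j', hj', hI'⟩ := hJ'.exists_mem hη
      rcases h.left_or_right ho hGh hJ.1 hJ'.1 (hsync J hJ) (hsync J' hJ') hj hj' hI hI' hne with
        hk | hk
      · exact (h.card_ge_of_two ho hd hn hη hG hGh hsync hJ hJ' hj hj' hI hI' hk).1
      · exact (h.card_ge_of_two ho hd hn hη hG hGh hsync hJ' hJ hj' hj hI' hI hk).2
  · by_contra! hc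
    obtain ⟨j1, m1, I1⟩ := h1.exists_mem hη
    obtain ⟨j2, m2, I2⟩ := h2.exists_mem hη
    obtain ⟨j3, m3, I3⟩ := h3.exists_mem hη
    have s1 := hsync _ h1
    have s2 := hsync _ h2
    have s3 := hsync _ h3
    have e12 := h.left_or_right ho hGh h1.1 h2.1 s1 s2 m1 m2 I1 I2 hc.1
    have e13 := h.left_or_right ho hGh h1.1 h3.1 s1 s3 m1 m3 I1 I3 hc.2.1
    have e23 := h.left_or_right ho hGh h2.1 h3.1 s2 s3 m2 m3 I2 I3 hc.2.2
    -- Three points cannot pairwise be on opposite sides of the gap of the first coordinate.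
    have hle := h.le ⟨0, hd⟩
    have f12 := e12.imp (fun e => e ⟨0, hd⟩) (fun e => e ⟨0, hd⟩)
    have f13 := e13.imp (fun e => e ⟨0, hd⟩) (fun e => e ⟨0, hd⟩)
    have f23 := e23.imp (fun e => e ⟨0, hd⟩) (fun e => e ⟨0, hd⟩)
    omega

/-- A point of tower `n` which is neither in the first nor in the last occurrence of tower `n`
inside tower `N` splits `I_n` around a gap of length at most `spa n + 1`. -/
theorem exists_split {y : ℤ → S.toNFCseq.Xpt} (hy : ∀ j, S.T (y j) = y (j + 1)) {N : ℕ}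
    (hnN : n < N) (hspa : ∀ r, n + 1 ≤ r → r < N → S.toNFCseq.spa r = 0)
    (h0 : y 0 ∈ S.toNFCseq.tower n) (hfst : 1 ≤ S.toNFCseq.occIdx n N (y 0))
    (hlst : S.toNFCseq.occIdx n N (y 0) + 1 < 3 ^ (N - n)) :
    ∃ (a b : ℤ) (u v : ℕ), S.OccT y n u (a - S.toNFCseq.hgt n) ∧ S.OccT y n v b ∧ u ≠ v ∧
      a ≤ b ∧ b ≤ a + (S.toNFCseq.spa n + 1 : ℕ) ∧
      a ≤ -((S.toNFCseq.hgt n / 2 : ℕ) : ℤ) + S.toNFCseq.hgt n ∧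
      -((S.toNFCseq.hgt n / 2 : ℕ) : ℤ) ≤ b := by
  obtain ⟨p, hp⟩ := Option.ne_none_iff_exists'.mp h0
  have hmid := occT_of_mem hy hp
  have hph := NFCseq.lt_hgt hp
  -- `I_n` overflows the occurrence of time `0` on the right or on the left.
  by_cases hc : S.toNFCseq.hgt n / 2 ≤ p
  · obtain ⟨g, t, hg, ht, hocc⟩ := next_occT hy hnN hspa hp hlst
    refine ⟨0 - p + S.toNFCseq.hgt n, _, _, t, ?_, hocc, ht.symm, ?_, ?_, ?_, ?_⟩
    · rw [add_sub_cancel_right]; exact hmid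
    all_goals omega
  · obtain ⟨g, t, hg, ht, hocc⟩ := prev_occT hy hnN hspa hp hfst
    refine ⟨0 - p - g, 0 - p, t, _, ?_, hmid, ht, ?_, ?_, ?_, ?_⟩
    · convert hocc using 1; ring
    all_goals omega

end NFC

/-- For all large `ℓ`, with `n = n_{ℓ−1}`: substantial `n`-crossings cover
a proportion at least `1 − (d+2)η` of `I_n` (in particular one exists); and if all
substantial `n`-crossings are synchronized, each has size at least `(1 − (d+2)η) h_n` and
there are at most two of them. -/
theorem stmt12 (S : NFCX) (d : ℕ) (hd : 2 ≤ d) (η : ℝ) (hη0 : 0 < η)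
    (hη1 : η < 1 / (100 * d))
    (σ : Measure (S.toNFC.Xd d)) (hσ0 : σ ≠ 0) (hR : S.toNFC.IsRadon d σ)
    (herg : Ergodic (S.toNFC.Td d) σ)
    (hconull : σ {y : S.toNFC.Xd d | ¬ ∀ i, y i ∈ S.Xinf} = 0)
    (o : ℤ → S.toNFC.Xd d) (hto : S.IsTypicalOrbit d σ o) :
    ∃ L0 : ℕ, 1 ≤ L0 ∧ ∀ ℓ : ℕ, L0 ≤ ℓ →
      ((1 - (d + 2) * η) * (S.toNFC.toNFCseq.hgt (S.nseq (ℓ - 1)) : ℝ) ≤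
        (((Imid S.toNFC.toNFCseq (S.nseq (ℓ - 1))).filter
          (fun j => ∃ J : Finset ℤ,
            S.toNFC.IsSubstantial d o η (S.nseq (ℓ - 1)) J ∧ j ∈ J)).card : ℝ)) ∧
      (∃ J : Finset ℤ, S.toNFC.IsSubstantial d o η (S.nseq (ℓ - 1)) J) ∧
      ((∀ J : Finset ℤ, S.toNFC.IsSubstantial d o η (S.nseq (ℓ - 1)) J →
          S.toNFC.IsSync d o (S.nseq (ℓ - 1)) J) →
        (∀ J : Finset ℤ, S.toNFC.IsSubstantial d o η (S.nseq (ℓ - 1)) J →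
          (1 - (d + 2) * η) * (S.toNFC.toNFCseq.hgt (S.nseq (ℓ - 1)) : ℝ) ≤ (J.card : ℝ)) ∧
        (∀ J₁ J₂ J₃ : Finset ℤ,
          S.toNFC.IsSubstantial d o η (S.nseq (ℓ - 1)) J₁ →
          S.toNFC.IsSubstantial d o η (S.nseq (ℓ - 1)) J₂ →
          S.toNFC.IsSubstantial d o η (S.nseq (ℓ - 1)) J₃ →
          J₁ = J₂ ∨ J₁ = J₃ ∨ J₂ = J₃)) := by
  obtain ⟨hstep, -, -, hinf⟩ := hto
  have ho : ∀ (i : Fin d) j, S.toNFC.T (o j i) = o (j + 1) i := fun i j => congrFun (hstep j) i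
  have hd0 : (0 : ℝ) < d := by exact_mod_cast (by omega : 0 < d)
  have hd2 : (2 : ℝ) ≤ d := by exact_mod_cast hd
  have hη' : η * (100 * d) < 1 := (lt_div_iff₀ (by positivity)).mp hη1
  have hdη : (d + 2) * η < 1 := by nlinarith
  -- `K` is such that the gaps, of length at most `2 h_n / 3^K`, are short enough.
  obtain ⟨K, hK⟩ := pow_unbounded_of_one_lt (2 * d / η) (by norm_num : (1 : ℝ) < 3)
  rw [div_lt_iff₀ hη0] at hK
  refine ⟨max (S.lseq K + 2) (Finset.univ.sup (fun i => S.ellx (o 0 i))), by omega,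
    fun ℓ hℓ => ?_⟩
  have hℓ1 : S.lseq K + 2 ≤ ℓ := le_trans (le_max_left _ _) hℓ
  have hℓ2 : ∀ i, S.ellx (o 0 i) ≤ ℓ := fun i =>
    (Finset.le_sup (f := fun i => S.ellx (o 0 i)) (Finset.mem_univ i)).trans
      ((le_max_right _ _).trans hℓ)
  obtain ⟨m, rfl⟩ : ∃ m, ℓ = m + 1 := ⟨ℓ - 1, by omega⟩
  have hgrow := S.nseq_growth (m + 1) (by omega)
  simp only [Nat.add_sub_cancel] at hgrow ⊢
  have hspa : ∀ r, S.nseq m + 1 ≤ r → r < S.nseq (m + 1) → S.spa r = 0 := fun r h1 h2 =>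
    NFCseq.spa_eq_zero (P := S.toNFCseq) (m := m) (by omega) h2
  have hs1 := NFCseq.spa_pos (P := S.toNFCseq) (m := m) (by omega)
  have hs2 := NFCseq.pow_mul_spa_le (P := S.toNFCseq) (m := m) (K := K) (by omega) (by omega)
  have hsplit : ∀ i : Fin d, _ := fun i => by
    obtain ⟨h1, h2, h3⟩ := S.Xinf_spec _ (hinf i) (m + 1) (hℓ2 i) (S.nseq m) (by simp) (by omega)
    rw [NFCseq.inFirstHundred] at h2
    rw [NFCseq.inLastHundred] at h3
    exact NFC.exists_split (y := fun j => o j i) (ho i) (by omega : S.nseq m < S.nseq (m + 1))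
      hspa h1 (by omega) (by omega)
  choose a b u v hL hR huv hle hgap ha hb using hsplit
  have hG : (d : ℝ) * (S.spa (S.nseq m) + 1 : ℕ) ≤ η * S.hgt (S.nseq m) := by
    have e1 : (3 : ℝ) ^ K * S.spa (S.nseq m) ≤ S.hgt (S.nseq m) := by exact_mod_cast hs2
    have e2 : (1 : ℝ) ≤ S.spa (S.nseq m) := by exact_mod_cast hs1
    push_cast
    calc (d : ℝ) * (S.spa (S.nseq m) + 1) ≤ (2 * d) * S.spa (S.nseq m) := by nlinarith
      _ ≤ (3 ^ K * η) * S.spa (S.nseq m) := by gcongr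
      _ = η * (3 ^ K * S.spa (S.nseq m)) := by ring
      _ ≤ η * S.hgt (S.nseq m) := by gcongr
  have hGh : S.spa (S.nseq m) + 1 < S.hgt (S.nseq m) := by
    have hh : (0 : ℝ) < S.hgt (S.nseq m) := by exact_mod_cast S.hgt_pos _
    have hη2 : η < 1 := by nlinarith
    have hX : (0 : ℝ) ≤ (S.spa (S.nseq m) + 1 : ℕ) := Nat.cast_nonneg _
    have e1 : ((S.spa (S.nseq m) + 1 : ℕ) : ℝ) ≤ d * (S.spa (S.nseq m) + 1 : ℕ) :=
      le_mul_of_one_le_left hX (by linarith)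
    have e2 : η * S.hgt (S.nseq m) < 1 * S.hgt (S.nseq m) := mul_lt_mul_of_pos_right hη2 hh
    have : ((S.spa (S.nseq m) + 1 : ℕ) : ℝ) < S.hgt (S.nseq m) := by linarith
    exact_mod_cast this
  exact NFC.Split.conclusion ⟨hL, hR, huv, hle, hgap, ha, hb⟩ ho (by omega) hs1 hη0 hdη hG hGh
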